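/- (Lemma A.4: variance-aware empirical two-sample bound on the MMD.) Let 𝒳 be a measurable additive group, H a real separable Hilbert space, and φ : 𝒳 → H a bounded measurable feature map; let g(x,y) := ⟨φ(x), φ(y)⟩ be translation invariant with range g̃ := sup g − inf g. Let ν_i, ν_j be probability measures on 𝒳 with KMEs μ_i, μ_j. Let X^i_1,…,X^i_n and X^j_1,…,X^j_n be mutually independent samples with X^i_t ∼ ν_i and X^j_t ∼ ν_j i.i.d., n ≥ 2; define the empirical KMEs μ̂_i := (1/n)Σ_t φ(X^i_t), μ̂_j := (1/n)Σ_t φ(X^j_t) and the empirical variances 𝒱̂_i := (1/(n−1)) Σ_t ( g(X^i_t,X^i_t) − (1/n)Σ_s g(X^i_t,X^i_s) ) and similarly 𝒱̂_j. Then for every δ' ∈ (0,1], with probability at least 1 − δ', | ‖μ̂_j − μ̂_i‖ − ‖μ_j − μ_i‖ | ≤ (√𝒱̂_i + √𝒱̂_j)·√(2·log(8/δ')/n) + (32/3)·√g̃·log(8/δ')/n. -/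

import Mathlib

open MeasureTheory ProbabilityTheory Finset

noncomputable section

/-- The kernel `g(x,y) = ⟪φ x, φ y⟫` associated with the feature map `φ`. -/
def kerG {𝒳 H : Type*} [NormedAddCommGroup H] [InnerProductSpace ℝ H]
    (φ : 𝒳 → H) (x y : 𝒳) : ℝ :=
  inner ℝ (φ x) (φ y)

/-- The range `g̃ = sup_{x,y} g(x,y) − inf_{x,y} g(x,y)` of the kernel. -/
def kerRange {𝒳 H : Type*} [NormedAddCommGroup H] [InnerProductSpace ℝ H]
    (φ : 𝒳 → H) : ℝ :=
  (⨆ p : 𝒳 × 𝒳, kerG φ p.1 p.2) - (⨅ p : 𝒳 × 𝒳, kerG φ p.1 p.2)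

/-- The kernel mean embedding `μ_ν = E_{X∼ν}[φ(X)]` (a Bochner integral). -/
def KME {𝒳 H : Type*} [MeasurableSpace 𝒳] [NormedAddCommGroup H] [InnerProductSpace ℝ H]
    (φ : 𝒳 → H) (ν : Measure 𝒳) : H :=
  ∫ x, φ x ∂ν

/-- The empirical kernel mean embedding `μ̂ = (1/n) Σ_{t<n} φ(x_t)`. -/
def empKME {𝒳 H : Type*} [NormedAddCommGroup H] [InnerProductSpace ℝ H]
    (φ : 𝒳 → H) (n : ℕ) (x : ℕ → 𝒳) : H :=
  (n : ℝ)⁻¹ • ∑ t ∈ range n, φ (x t)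

/-- The empirical RKHS variance
`𝒱̂ = (1/(n−1)) Σ_{t<n} (g(x_t,x_t) − (1/n) Σ_{s<n} g(x_t,x_s))`. -/
def empVar {𝒳 H : Type*} [NormedAddCommGroup H] [InnerProductSpace ℝ H]
    (φ : 𝒳 → H) (n : ℕ) (x : ℕ → 𝒳) : ℝ :=
  ((n : ℝ) - 1)⁻¹ * ∑ t ∈ range n,
    (kerG φ (x t) (x t) - (n : ℝ)⁻¹ * ∑ s ∈ range n, kerG φ (x t) (x s))


lemma aux_cosh_chord (s p q w : ℝ) (hw0 : 0 ≤ w) (hw1 : w ≤ 1)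
    (hs : s ^ 2 = w * p ^ 2 + (1 - w) * q ^ 2) :
    Real.cosh s ≤ w * Real.cosh p + (1 - w) * Real.cosh q := by
  refine hasSum_le ?_ (Real.hasSum_cosh s)
    (((Real.hasSum_cosh p).mul_left w).add ((Real.hasSum_cosh q).mul_left (1 - w)))
  intro k
  have h := (convexOn_pow (𝕜 := ℝ) k).2 (Set.mem_Ici.2 (sq_nonneg p)) (Set.mem_Ici.2 (sq_nonneg q))
    hw0 (sub_nonneg.2 hw1) (by ring)
  simp only [smul_eq_mul] at h
  rw [← hs] at h
  simp only [pow_mul]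
  rw [← mul_div_assoc, ← mul_div_assoc, ← add_div]
  gcongr

lemma aux_cosh_norm_add {H : Type*} [NormedAddCommGroup H] [InnerProductSpace ℝ H] (x : H) :
    ∃ y : H, ∀ v : H, Real.cosh ‖x + v‖ ≤
      Real.cosh ‖x‖ * (Real.exp ‖v‖ - ‖v‖) + inner ℝ y v := by
  have hcs : ∀ b : ℝ, Real.exp b = Real.cosh b + Real.sinh b := fun b => (Real.cosh_add_sinh b).symm
  have hsb : ∀ v : H, ‖v‖ ≤ Real.sinh ‖v‖ := fun v => Real.self_le_sinh_iff.2 (norm_nonneg v)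
  by_cases hx : x = 0
  · subst hx
    refine ⟨0, fun v => ?_⟩
    have := hsb v
    rw [zero_add, norm_zero, Real.cosh_zero, inner_zero_left, hcs]
    linarith
  refine ⟨(Real.sinh ‖x‖ / ‖x‖) • x, fun v => ?_⟩
  by_cases hv : v = 0
  · subst hv; simp
  have ha : 0 < ‖x‖ := norm_pos_iff.2 hx
  have hb : 0 < ‖v‖ := norm_pos_iff.2 hv
  set c : ℝ := inner ℝ x v / (‖x‖ * ‖v‖) with hc
  have hcabs := abs_real_inner_div_norm_mul_norm_le_one x v
  rw [← hc, abs_le] at hcabs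
  have hin : inner ℝ x v = c * (‖x‖ * ‖v‖) := by rw [hc]; field_simp
  have h := aux_cosh_chord ‖x + v‖ (‖x‖ + ‖v‖) (‖x‖ - ‖v‖) ((1 + c) / 2) (by linarith) (by linarith)
    (by rw [norm_add_sq_real, hin]; ring)
  rw [Real.cosh_add, Real.cosh_sub] at h
  rw [real_inner_smul_left, hin, hcs]
  have e1 : Real.sinh ‖x‖ / ‖x‖ * (c * (‖x‖ * ‖v‖)) = c * Real.sinh ‖x‖ * ‖v‖ := by field_simp
  rw [e1]
  have h1 : 0 ≤ Real.sinh ‖x‖ := Real.sinh_nonneg_iff.2 ha.le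
  have h2 : Real.sinh ‖x‖ ≤ Real.cosh ‖x‖ := (Real.sinh_lt_cosh _).le
  have h3 := hsb v
  have h4 : c * Real.sinh ‖x‖ ≤ Real.cosh ‖x‖ := by nlinarith
  nlinarith

lemma aux_exp_le (u U : ℝ) (hu : 0 ≤ u) (huU : u ≤ U) (hU : U < 3) :
    Real.exp u - u - 1 ≤ u ^ 2 * (1 / (2 * (1 - U / 3))) := by
  have h1 : HasSum (fun k : ℕ => u ^ k / (k.factorial : ℝ)) (Real.exp u) := by
    rw [Real.exp_eq_exp_ℝ]
    exact NormedSpace.expSeries_div_hasSum_exp u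
  have h2 := (hasSum_nat_add_iff' 2).2 h1
  have h3 := (hasSum_geometric_of_lt_one (r := u / 3) (by positivity) (by linarith)).mul_left (u ^ 2 / 2)
  have h4 := hasSum_le (fun k => ?_) h2 h3
  · simp [Finset.sum_range_succ] at h4
    have : (1 - u / 3)⁻¹ ≤ (1 - U / 3)⁻¹ := by
      apply inv_anti₀ <;> linarith
    have h5 : u ^ 2 / 2 * (1 - u / 3)⁻¹ ≤ u ^ 2 / 2 * (1 - U / 3)⁻¹ := by gcongr
    have e : u ^ 2 * (1 / (2 * (1 - U / 3))) = u ^ 2 / 2 * (1 - U / 3)⁻¹ := by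
      rw [one_div, mul_inv]; ring
    rw [e]; linarith
  · have hf : (2 : ℝ) * 3 ^ k ≤ ((k + 2).factorial : ℝ) := by
      have : 2 * 3 ^ k ≤ (k + 2).factorial := by
        induction k with
        | zero => simp
        | succ k ih =>
          rw [show k + 1 + 2 = (k + 2) + 1 by ring, Nat.factorial_succ, pow_succ]
          nlinarith [Nat.zero_le k]
      exact_mod_cast this
    have : u ^ 2 / 2 * (u / 3) ^ k = u ^ (k + 2) / (2 * 3 ^ k) := by
      rw [div_pow, pow_add]; field_simp
    rw [this]
    gcongr

lemma aux_exp_neg_le (u : ℝ) (hu : 0 ≤ u) : Real.exp (-u) ≤ 1 - u + u ^ 2 / 2 := by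
  have h := Real.quadratic_le_exp_of_nonneg hu
  rw [Real.exp_neg, inv_le_iff_one_le_mul₀ (Real.exp_pos u)]
  have : 0 ≤ 1 - u + u ^ 2 / 2 := by nlinarith [sq_nonneg (u - 1)]
  nlinarith [sq_nonneg (u ^ 2), mul_le_mul_of_nonneg_left h this]

lemma aux_supermart {H Ω : Type*} 
    [NormedAddCommGroup H] [InnerProductSpace ℝ H] [CompleteSpace H]
    [SecondCountableTopology H] [MeasurableSpace H] [BorelSpace H] [MeasurableSpace Ω]
    (P : Measure Ω) [IsProbabilityMeasure P] (W : ℕ → Ω → H) (hW : ∀ t, Measurable (W t))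
    (B A : ℝ) (hB : ∀ t ω, ‖W t ω‖ ≤ B) (hind : iIndepFun W P) (h0 : ∀ t, ∫ ω, W t ω ∂P = 0)
    (hA : ∀ t, ∫ ω, (Real.exp ‖W t ω‖ - ‖W t ω‖) ∂P ≤ A) (hA0 : 0 ≤ A) (k : ℕ) :
    ∫⁻ ω, ENNReal.ofReal (Real.cosh ‖∑ t ∈ range k, W t ω‖) ∂P ≤ ENNReal.ofReal (A ^ k) := by
  induction k with
  | zero => simp
  | succ k ih =>
    have hI := (hind.indepFun_finsetSum_of_notMem hW (s := range k) (i := k) (by simp))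
    have hS : Measurable (∑ t ∈ range k, W t) := by fun_prop
    have hmap := hI.map_prod_eq_prod_map_map hS.aemeasurable (hW k).aemeasurable
    have hF : Measurable (fun p : H × H => ENNReal.ofReal (Real.cosh ‖p.1 + p.2‖)) := by
      have : Measurable Real.cosh := Real.continuous_cosh.measurable
      fun_prop
    have step : ∀ s : H, ∫⁻ ω, ENNReal.ofReal (Real.cosh ‖s + W k ω‖) ∂P ≤
        ENNReal.ofReal (Real.cosh ‖s‖) * ENNReal.ofReal A := by
      intro s
      obtain ⟨y, hy⟩ := aux_cosh_norm_add s
      have hInt : Integrable (W k) P :=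
        Integrable.of_bound (hW k).aestronglyMeasurable B (ae_of_all _ (hB k))
      have hint2 : Integrable (fun ω => Real.exp ‖W k ω‖) P := by
        refine Integrable.of_bound (by have := hW k; fun_prop) (Real.exp B) (ae_of_all _ fun ω => ?_)
        rw [Real.norm_eq_abs, Real.abs_exp]
        exact Real.exp_le_exp.2 (hB k ω)
      have hint3 : Integrable (fun ω => Real.cosh ‖s‖ * (Real.exp ‖W k ω‖ - ‖W k ω‖) + inner ℝ y (W k ω)) P :=
        ((hint2.sub hInt.norm).const_mul _).add (hInt.const_inner y)
      calc _ ≤ ∫⁻ ω, ENNReal.ofReal (Real.cosh ‖s‖ * (Real.exp ‖W k ω‖ - ‖W k ω‖) + inner ℝ y (W k ω)) ∂P :=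
            lintegral_mono fun ω => ENNReal.ofReal_le_ofReal (hy _)
        _ = ENNReal.ofReal (∫ ω, (Real.cosh ‖s‖ * (Real.exp ‖W k ω‖ - ‖W k ω‖) + inner ℝ y (W k ω)) ∂P) := by
            rw [ofReal_integral_eq_lintegral_ofReal hint3]
            exact ae_of_all _ fun ω => (Real.cosh_pos _).le.trans (hy _)
        _ ≤ _ := by
            rw [← ENNReal.ofReal_mul (Real.cosh_pos _).le]
            apply ENNReal.ofReal_le_ofReal
            have hi1 : Integrable (fun ω => Real.cosh ‖s‖ * (Real.exp ‖W k ω‖ - ‖W k ω‖)) P :=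
              (hint2.sub hInt.norm).const_mul _
            rw [integral_add hi1 (hInt.const_inner y), integral_const_mul, integral_inner hInt, h0 k, inner_zero_right, add_zero]
            exact mul_le_mul_of_nonneg_left (hA k) (Real.cosh_pos _).le
    calc _ = ∫⁻ ω, ENNReal.ofReal (Real.cosh ‖(∑ t ∈ range k, W t) ω + W k ω‖) ∂P := by
          simp [Finset.sum_range_succ]
      _ = ∫⁻ p, ENNReal.ofReal (Real.cosh ‖p.1 + p.2‖) ∂(P.map (fun ω => ((∑ t ∈ range k, W t) ω, W k ω))) := by
          rw [lintegral_map hF (hS.prodMk (hW k))]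
      _ = ∫⁻ s, ∫⁻ z, ENNReal.ofReal (Real.cosh ‖s + z‖) ∂(P.map (W k)) ∂(P.map (∑ t ∈ range k, W t)) := by
          rw [hmap, lintegral_prod _ hF.aemeasurable]
      _ ≤ ∫⁻ s, ENNReal.ofReal (Real.cosh ‖s‖) * ENNReal.ofReal A ∂(P.map (∑ t ∈ range k, W t)) := by
          refine lintegral_mono fun s => ?_
          have hFs : Measurable (fun z : H => ENNReal.ofReal (Real.cosh ‖s + z‖)) := by
            have : Measurable Real.cosh := Real.continuous_cosh.measurable
            fun_prop
          rw [lintegral_map hFs (hW k)]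
          exact step s
      _ = (∫⁻ ω, ENNReal.ofReal (Real.cosh ‖∑ t ∈ range k, W t ω‖) ∂P) * ENNReal.ofReal A := by
          have hm : Measurable (fun s : H => ENNReal.ofReal (Real.cosh ‖s‖)) := by
            have : Measurable Real.cosh := Real.continuous_cosh.measurable
            fun_prop
          rw [lintegral_mul_const _ hm, lintegral_map hm hS]
          simp
      _ ≤ ENNReal.ofReal (A ^ k) * ENNReal.ofReal A := by gcongr
      _ = ENNReal.ofReal (A ^ (k + 1)) := by
          rw [← ENNReal.ofReal_mul (pow_nonneg hA0 k), pow_succ]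

lemma aux_bernstein {H Ω : Type*}
    [NormedAddCommGroup H] [InnerProductSpace ℝ H] [CompleteSpace H]
    [SecondCountableTopology H] [MeasurableSpace H] [BorelSpace H] [MeasurableSpace Ω]
    (P : Measure Ω) [IsProbabilityMeasure P] (Z : ℕ → Ω → H) (hZ : ∀ t, Measurable (Z t))
    (M v L : ℝ) (hM : 0 < M) (hv : 0 < v) (hL : 0 < L)
    (hB : ∀ t ω, ‖Z t ω‖ ≤ M) (hind : iIndepFun Z P) (h0 : ∀ t, ∫ ω, Z t ω ∂P = 0)
    (hvar : ∀ t, ∫ ω, ‖Z t ω‖ ^ 2 ∂P = v) (n : ℕ) (hn : 0 < n) :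
    P {ω | √(2 * n * v * L) + M * L / 3 < ‖∑ t ∈ range n, Z t ω‖} ≤
      ENNReal.ofReal (2 * Real.exp (-L)) := by
  have hn' : (0 : ℝ) < n := by exact_mod_cast hn
  set s : ℝ := √(2 * L / (n * v)) with hs
  have hs0 : 0 < s := by rw [hs]; positivity
  have hs2 : n * v * s ^ 2 = 2 * L := by
    rw [hs, Real.sq_sqrt (by positivity)]; field_simp
  have hsr : s * √(2 * n * v * L) = 2 * L := by
    rw [hs, ← Real.sqrt_mul (by positivity)]
    rw [show 2 * L / (n * v) * (2 * n * v * L) = (2 * L) ^ 2 by field_simp]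
    exact Real.sqrt_sq (by positivity)
  set r : ℝ := √(2 * n * v * L) + M * L / 3 with hr
  have hr0 : 0 < r := by rw [hr]; positivity
  set q : ℝ := 1 + s * M / 3 with hq
  have hq0 : 0 < q := by rw [hq]; positivity
  set l : ℝ := s / q with hl
  have hl0 : 0 < l := by rw [hl]; positivity
  have hlM : 1 - l * M / 3 = 1 / q := by
    rw [hl]; field_simp; rw [hq]; ring
  have hc : 1 / (2 * (1 - l * M / 3)) = q / 2 := by rw [hlM]; field_simp
  have hlM3 : l * M < 3 := by
    have : 0 < 1 / q := by positivity
    linarith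
  set A : ℝ := 1 + l ^ 2 * v * (q / 2) with hA
  have hA0 : 0 ≤ A := by rw [hA]; positivity
  have hnW : ∀ t ω, ‖l • Z t ω‖ = l * ‖Z t ω‖ := fun t ω => by
    rw [norm_smul, Real.norm_eq_abs, abs_of_pos hl0]
  have key := aux_supermart P (fun t ω => l • Z t ω) (fun t => (hZ t).const_smul l) (l * M) A
    (fun t ω => by rw [hnW]; exact mul_le_mul_of_nonneg_left (hB t ω) hl0.le)
    (hind.comp (fun _ z => l • z) (fun _ => measurable_const_smul l))
    (fun t => by rw [integral_smul, h0 t, smul_zero])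
    (fun t => by
      have hi2 : Integrable (fun ω => ‖Z t ω‖ ^ 2) P := by
        refine Integrable.of_bound (by have := hZ t; fun_prop) (M ^ 2) (ae_of_all _ fun ω => ?_)
        rw [norm_pow, norm_norm]
        exact pow_le_pow_left₀ (norm_nonneg _) (hB t ω) 2
      have hi3 : Integrable (fun ω => 1 + (l ^ 2 * (q / 2)) * ‖Z t ω‖ ^ 2) P :=
        (integrable_const _).add (hi2.const_mul _)
      calc _ ≤ ∫ ω, (1 + (l ^ 2 * (q / 2)) * ‖Z t ω‖ ^ 2) ∂P := by
            refine integral_mono_of_nonneg (ae_of_all _ fun ω => ?_) hi3 (ae_of_all _ fun ω => ?_)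
            · have := Real.add_one_le_exp ‖l • Z t ω‖
              simp only [Pi.zero_apply]; linarith
            · have := aux_exp_le (l * ‖Z t ω‖) (l * M) (by positivity)
                (mul_le_mul_of_nonneg_left (hB t ω) hl0.le) hlM3
              rw [hc] at this
              simp only [hnW]
              nlinarith
        _ = A := by
            rw [integral_add (integrable_const _) (hi2.const_mul _), integral_const_mul, hvar t, hA]
            simp; ring)
    hA0 n
  have hmeas : AEMeasurable (fun ω => ENNReal.ofReal (Real.cosh ‖∑ t ∈ range n, l • Z t ω‖)) P := by
    have : Measurable Real.cosh := Real.continuous_cosh.measurable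
    fun_prop
  have hcosh : 0 < Real.cosh (l * r) := Real.cosh_pos _
  have hsub : {ω | r < ‖∑ t ∈ range n, Z t ω‖} ⊆
      {ω | ENNReal.ofReal (Real.cosh (l * r)) ≤ ENNReal.ofReal (Real.cosh ‖∑ t ∈ range n, l • Z t ω‖)} := by
    intro ω hω
    simp only [Set.mem_ofPred_eq] at hω ⊢
    apply ENNReal.ofReal_le_ofReal
    rw [Real.cosh_le_cosh, ← Finset.smul_sum, norm_smul, Real.norm_eq_abs, abs_of_pos hl0, abs_of_nonneg (by positivity), abs_of_nonneg (by positivity)]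
    gcongr
  calc _ ≤ _ := measure_mono hsub
    _ ≤ _ := meas_ge_le_lintegral_div hmeas (by simpa using hcosh) ENNReal.ofReal_ne_top
    _ ≤ ENNReal.ofReal (A ^ n) / ENNReal.ofReal (Real.cosh (l * r)) := by gcongr
    _ = ENNReal.ofReal (A ^ n / Real.cosh (l * r)) := (ENNReal.ofReal_div_of_pos hcosh).symm
    _ ≤ _ := by
      apply ENNReal.ofReal_le_ofReal
      rw [div_le_iff₀ hcosh]
      have h1 : A ^ n ≤ Real.exp (n * (l ^ 2 * v * (q / 2))) := by
        rw [Real.exp_nat_mul]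
        apply pow_le_pow_left₀ hA0
        rw [hA, add_comm]
        exact Real.add_one_le_exp _
      have h2 : Real.exp (l * r) / 2 ≤ Real.cosh (l * r) := by
        rw [Real.cosh_eq]
        have := Real.exp_pos (-(l * r))
        linarith
      have h3 : n * (l ^ 2 * v * (q / 2)) = -L + l * r := by
        rw [hl, hr]
        have e1 : n * ((s / q) ^ 2 * v * (q / 2)) = (n * v * s ^ 2) / (2 * q) := by field_simp
        have e2 : s / q * (√(2 * n * v * L) + M * L / 3) = (s * √(2 * n * v * L) + s * M / 3 * L) / q := by
          field_simp
        rw [e1, e2, hs2, hsr]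
        have e3 : s * M / 3 = q - 1 := by rw [hq]; ring
        rw [e3]
        field_simp
        ring
      rw [h3, Real.exp_add] at h1
      calc A ^ n ≤ _ := h1
        _ = 2 * Real.exp (-L) * (Real.exp (l * r) / 2) := by ring
        _ ≤ _ := by gcongr

lemma aux_lower {Ω : Type*} [MeasurableSpace Ω]
    (P : Measure Ω) [IsProbabilityMeasure P] (Y : ℕ → Ω → ℝ) (hY : ∀ t, Measurable (Y t))
    (M v L : ℝ) (hM : 0 < M) (hv : 0 < v) (hL : 0 < L)
    (hY0 : ∀ t ω, 0 ≤ Y t ω) (hB : ∀ t ω, Y t ω ≤ M ^ 2) (hind : iIndepFun Y P)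
    (h0 : ∀ t, ∫ ω, Y t ω ∂P = v) (n : ℕ) (hn : 0 < n) :
    P {ω | ∑ t ∈ range n, Y t ω < n * v - M * √(2 * n * v * L)} ≤
      ENNReal.ofReal (Real.exp (-L)) := by
  have hn' : (0 : ℝ) < n := by exact_mod_cast hn
  set s : ℝ := √(2 * L / (n * v)) with hs
  have hs0 : 0 < s := by rw [hs]; positivity
  have hs2 : n * v * s ^ 2 = 2 * L := by
    rw [hs, Real.sq_sqrt (by positivity)]; field_simp
  have hsr : s * √(2 * n * v * L) = 2 * L := by
    rw [hs, ← Real.sqrt_mul (by positivity)]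
    rw [show 2 * L / (n * v) * (2 * n * v * L) = (2 * L) ^ 2 by field_simp]
    exact Real.sqrt_sq (by positivity)
  set l : ℝ := s / M with hl
  have hl0 : 0 < l := by rw [hl]; positivity
  have hlM : l * M = s := by rw [hl]; field_simp
  have hmgf : ∀ t, mgf (Y t) P (-l) ≤ Real.exp (- l * v + l ^ 2 * M ^ 2 * v / 2) := by
    intro t
    have hi1 : Integrable (Y t) P :=
      Integrable.of_bound (hY t).aestronglyMeasurable (M ^ 2) (ae_of_all _ fun ω => by
        rw [Real.norm_eq_abs, abs_of_nonneg (hY0 t ω)]; exact hB t ω)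
    have hi3 : Integrable (fun ω => 1 + (- l + l ^ 2 * M ^ 2 / 2) * Y t ω) P :=
      (integrable_const _).add (hi1.const_mul _)
    calc mgf (Y t) P (-l) ≤ ∫ ω, (1 + (- l + l ^ 2 * M ^ 2 / 2) * Y t ω) ∂P := by
          refine integral_mono_of_nonneg (ae_of_all _ fun ω => (Real.exp_pos _).le) hi3
            (ae_of_all _ fun ω => ?_)
          have h1 := aux_exp_neg_le (l * Y t ω) (mul_nonneg hl0.le (hY0 t ω))
          have h2 : (l * Y t ω) ^ 2 ≤ l ^ 2 * M ^ 2 * Y t ω := by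
            have := mul_le_mul_of_nonneg_right (hB t ω) (hY0 t ω)
            nlinarith [sq_nonneg l]
          simp only [neg_mul]
          linarith
      _ = (- l * v + l ^ 2 * M ^ 2 * v / 2) + 1 := by
          rw [integral_add (integrable_const _) (hi1.const_mul _), integral_const_mul, h0 t]
          simp; ring
      _ ≤ _ := Real.add_one_le_exp _
  have hmeasS : Measurable (∑ t ∈ range n, Y t) := by fun_prop
  have hInt : Integrable (fun ω => Real.exp (-l * (∑ t ∈ range n, Y t) ω)) P := by
    refine Integrable.of_bound (by fun_prop) 1 (ae_of_all _ fun ω => ?_)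
    rw [Real.norm_eq_abs, Real.abs_exp, Real.exp_le_one_iff]
    have : 0 ≤ (∑ t ∈ range n, Y t) ω := by
      rw [Finset.sum_apply]; exact Finset.sum_nonneg fun t _ => hY0 t ω
    nlinarith
  have key := measure_le_le_exp_mul_mgf (μ := P) (X := ∑ t ∈ range n, Y t) (t := -l)
    (n * v - M * √(2 * n * v * L)) (by linarith) hInt
  rw [hind.mgf_sum hY] at key
  have hprod : ∏ t ∈ range n, mgf (Y t) P (-l) ≤
      Real.exp (n * (- l * v + l ^ 2 * M ^ 2 * v / 2)) := by
    rw [Real.exp_nat_mul]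
    calc _ ≤ ∏ t ∈ range n, Real.exp (- l * v + l ^ 2 * M ^ 2 * v / 2) :=
          Finset.prod_le_prod (fun t _ => mgf_nonneg) fun t _ => hmgf t
      _ = _ := by simp
  have hfin : P.real {ω | (∑ t ∈ range n, Y t) ω ≤ n * v - M * √(2 * n * v * L)} ≤ Real.exp (-L) := by
    refine key.trans ?_
    calc _ ≤ Real.exp (-(-l) * (n * v - M * √(2 * n * v * L))) *
          Real.exp (n * (- l * v + l ^ 2 * M ^ 2 * v / 2)) := by gcongr
      _ = Real.exp (-L) := by
          rw [← Real.exp_add]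
          congr 1
          have e1 : l * M * √(2 * n * v * L) = 2 * L := by rw [hlM, hsr]
          have e2 : n * v * (l * M) ^ 2 = 2 * L := by rw [hlM, hs2]
          linear_combination (-1 : ℝ) * e1 + e2 / 2
  calc _ ≤ P {ω | (∑ t ∈ range n, Y t) ω ≤ n * v - M * √(2 * n * v * L)} := by
        apply measure_mono
        intro ω hω
        simp only [Set.mem_ofPred_eq, Finset.sum_apply] at hω ⊢
        exact hω.le
    _ = ENNReal.ofReal (P.real _) := by rw [ofReal_measureReal]
    _ ≤ _ := ENNReal.ofReal_le_ofReal hfin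

lemma aux_det (y G w D avg V N : ℝ) (hN : 1 ≤ N) (hy : 0 ≤ y) (hyG : y ≤ G) (hw : 0 ≤ w)
    (hD0 : 0 ≤ D) (hG : 0 < G)
    (hD : D ≤ √2 * y * w + √2 / 3 * G * w ^ 2) (havg : y ^ 2 - 2 * G * y * w ≤ avg)
    (hV : (N - 1) * V = N * (avg - D ^ 2)) :
    D ≤ √V * (√2 * w) + 16 / 3 * G * w ^ 2 := by
  have h2 : √2 ^ 2 = 2 := Real.sq_sqrt (by norm_num)
  have h20 : 0 < √2 := by positivity
  have h21 : √2 ≤ 1.6 := by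
    rw [Real.sqrt_le_left (by norm_num)]; norm_num
  have claim : y ≤ √V + 3 * G * w := by
    by_cases hc : y ≤ 3 * G * w
    · have := Real.sqrt_nonneg V
      linarith
    push Not at hc
    suffices h : y - 3 * G * w ≤ √V by linarith
    apply Real.le_sqrt_of_sq_le
    have hy0 : 0 < y := by
      have : 0 ≤ 3 * G * w := by positivity
      linarith
    have hD2 : D ^ 2 ≤ 200 / 243 * G * w * y := by
      have a1 : D ≤ √2 * w * (10 / 9 * y) := by
        have : √2 * w * (y + G * w / 3) ≤ √2 * w * (10 / 9 * y) := by
          apply mul_le_mul_of_nonneg_left _ (by positivity)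
          linarith
        linarith
      have a2 : D ^ 2 ≤ (√2 * w * (10 / 9 * y)) ^ 2 := pow_le_pow_left₀ hD0 a1 2
      have a3 : (√2 * w * (10 / 9 * y)) ^ 2 = 200 / 81 * (w ^ 2 * y ^ 2) := by
        rw [mul_pow, mul_pow, h2]; ring
      have a4 : 3 * (w ^ 2 * y ^ 2) ≤ G * w * y := by
        have b1 : 3 * w * y ≤ G := by
          have c1 : 3 * G * w * y ≤ y * y := by nlinarith
          have c2 : G * (3 * w * y) ≤ G * G := by nlinarith
          exact le_of_mul_le_mul_left c2 hG
        have : 0 ≤ w * y := by positivity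
        nlinarith
      linarith
    have b9 : 9 * (G * w) ^ 2 ≤ 3 * (G * w) * y := by
      have : 0 ≤ G * w := by positivity
      nlinarith
    have hge : (y - 3 * G * w) ^ 2 ≤ avg - D ^ 2 := by
      have : 0 ≤ G * w * y := by positivity
      nlinarith
    have hge0 : 0 ≤ avg - D ^ 2 := (sq_nonneg _).trans hge
    rcases eq_or_lt_of_le hN with h1 | h1
    · rw [← h1] at hV
      have : avg - D ^ 2 = 0 := by linarith
      have hV0 : (y - 3 * G * w) ^ 2 ≤ 0 := by linarith
      nlinarith [sq_pos_of_pos (sub_pos.2 hc)]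
    · have : 0 < N - 1 := by linarith
      have : (N - 1) * (avg - D ^ 2) ≤ (N - 1) * V := by rw [hV]; nlinarith
      exact hge.trans (le_of_mul_le_mul_left this (by linarith))
  have h3 : √2 * w * y ≤ √2 * w * (√V + 3 * G * w) := by gcongr
  have h4 : √2 * (G * w ^ 2) ≤ 1.6 * (G * w ^ 2) := by gcongr
  nlinarith

lemma aux_kernel {𝒳 H : Type*} [MeasurableSpace 𝒳] [AddCommGroup 𝒳]
    [NormedAddCommGroup H] [InnerProductSpace ℝ H] [CompleteSpace H]
    [SecondCountableTopology H] [MeasurableSpace H] [BorelSpace H]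
    (φ : 𝒳 → H) (hφmeas : Measurable φ) (hφbdd : ∃ C : ℝ, ∀ x : 𝒳, ‖φ x‖ ≤ C)
    (hTI : ∃ Ψ : 𝒳 → ℝ, ∀ x y : 𝒳, kerG φ x y = Ψ (x - y))
    (ν : Measure 𝒳) [IsProbabilityMeasure ν] :
    (∀ x, ‖φ x - KME φ ν‖ ≤ √2 * √(kerRange φ)) ∧
      ∫ x, ‖φ x - KME φ ν‖ ^ 2 ∂ν ≤ kerRange φ := by
  obtain ⟨C, hC⟩ := hφbdd
  obtain ⟨Ψ, hΨ⟩ := hTI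
  have habs : ∀ x y, |kerG φ x y| ≤ C * C := fun x y =>
    (abs_real_inner_le_norm _ _).trans
      (mul_le_mul (hC x) (hC y) (norm_nonneg _) ((norm_nonneg _).trans (hC x)))
  have hba : BddAbove (Set.range fun p : 𝒳 × 𝒳 => kerG φ p.1 p.2) :=
    ⟨C * C, by rintro _ ⟨p, rfl⟩; exact (abs_le.1 (habs _ _)).2⟩
  have hbb : BddBelow (Set.range fun p : 𝒳 × 𝒳 => kerG φ p.1 p.2) :=
    ⟨-(C * C), by rintro _ ⟨p, rfl⟩; exact (abs_le.1 (habs _ _)).1⟩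
  set a : ℝ := ⨆ p : 𝒳 × 𝒳, kerG φ p.1 p.2 with ha
  set b : ℝ := ⨅ p : 𝒳 × 𝒳, kerG φ p.1 p.2 with hb
  have hR : kerRange φ = a - b := rfl
  have hsup : ∀ x y, kerG φ x y ≤ a := fun x y => le_ciSup hba (x, y)
  have hinf : ∀ x y, b ≤ kerG φ x y := fun x y => ciInf_le hbb (x, y)
  have hsq : ∀ x, ‖φ x‖ ^ 2 = Ψ 0 := fun x => by
    rw [← real_inner_self_eq_norm_sq]
    have := hΨ x x
    rw [sub_self] at this
    exact this
  have hΨ0 : Ψ 0 ≤ a := by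
    have := hsup 0 0
    rwa [hΨ, sub_self] at this
  have hInt : Integrable φ ν :=
    Integrable.of_bound hφmeas.aestronglyMeasurable C (ae_of_all _ hC)
  constructor
  · intro x
    have h1 : φ x - KME φ ν = ∫ y, (φ x - φ y) ∂ν := by
      rw [integral_sub (integrable_const _) hInt]; simp [KME]
    rw [h1]
    have h2 := norm_integral_le_of_norm_le_const (μ := ν) (f := fun y => φ x - φ y)
      (C := √2 * √(kerRange φ)) (ae_of_all _ fun y => ?_)
    · simpa using h2
    · rw [← Real.sqrt_mul (by norm_num)]
      apply Real.le_sqrt_of_sq_le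
      rw [norm_sub_sq_real, hsq, hsq, hR]
      have := hinf x y
      unfold kerG at this
      linarith
  · set m := KME φ ν with hm
    have hmi : ∀ x, inner ℝ m (φ x) = ∫ y, kerG φ x y ∂ν := fun x => by
      rw [real_inner_comm, hm, KME, ← integral_inner hInt]; rfl
    have hmi' : ∀ x, b ≤ inner ℝ m (φ x) := fun x => by
      rw [hmi]
      have hi : Integrable (fun y => kerG φ x y) ν := hInt.const_inner (φ x)
      have := integral_mono (μ := ν) (integrable_const b) hi (fun y => hinf x y)
      simpa using this
    have hmm : inner ℝ m m = ∫ x, inner ℝ m (φ x) ∂ν := by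
      rw [integral_inner hInt]; rfl
    have hbm : b ≤ ‖m‖ ^ 2 := by
      rw [← real_inner_self_eq_norm_sq, hmm]
      have := integral_mono (μ := ν) (integrable_const b) (hInt.const_inner m) hmi'
      simpa using this
    have h1 : ∀ x, ‖φ x - m‖ ^ 2 = (Ψ 0 + ‖m‖ ^ 2) - 2 * inner ℝ m (φ x) := fun x => by
      rw [norm_sub_sq_real, hsq, real_inner_comm]; ring
    simp_rw [h1]
    rw [integral_sub (integrable_const _) ((hInt.const_inner m).const_mul 2), integral_const_mul,
      ← hmm, real_inner_self_eq_norm_sq, hR]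
    simp
    linarith

lemma aux_empVar {𝒳 H : Type*} [NormedAddCommGroup H] [InnerProductSpace ℝ H]
    (φ : 𝒳 → H) (n : ℕ) (hn : 2 ≤ n) (x : ℕ → 𝒳) (m : H) :
    ((n : ℝ) - 1) * empVar φ n x =
      n * ((n : ℝ)⁻¹ * ∑ t ∈ range n, ‖φ (x t) - m‖ ^ 2 - ‖empKME φ n x - m‖ ^ 2) := by
  have hn' : (2 : ℝ) ≤ n := by exact_mod_cast hn
  have hn1 : (n : ℝ) - 1 ≠ 0 := by linarith
  have hn0 : (n : ℝ) ≠ 0 := by linarith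
  unfold empVar
  rw [mul_inv_cancel_left₀ hn1]
  have h1 : ∀ t, ∑ s ∈ range n, kerG φ (x t) (x s) = inner ℝ (φ (x t)) (∑ s ∈ range n, φ (x s)) :=
    fun t => by rw [inner_sum]; rfl
  simp_rw [h1]
  set S := ∑ s ∈ range n, φ (x s) with hS
  rw [Finset.sum_sub_distrib, ← Finset.mul_sum, ← sum_inner, ← hS]
  have h2 : ∑ t ∈ range n, ‖φ (x t) - m‖ ^ 2 =
      ∑ t ∈ range n, kerG φ (x t) (x t) - 2 * inner ℝ S m + n * ‖m‖ ^ 2 := by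
    simp_rw [norm_sub_sq_real]
    rw [Finset.sum_add_distrib, Finset.sum_sub_distrib, ← Finset.mul_sum, ← sum_inner, ← hS]
    simp [kerG]
  have h3 : ‖empKME φ n x - m‖ ^ 2 =
      (n : ℝ)⁻¹ ^ 2 * inner ℝ S S - 2 * ((n : ℝ)⁻¹ * inner ℝ S m) + ‖m‖ ^ 2 := by
    unfold empKME
    rw [norm_sub_sq_real, ← hS, real_inner_smul_left, norm_smul, mul_pow, real_inner_self_eq_norm_sq]
    simp
  rw [h2, h3]
  field_simp
  ring

lemma aux_one {𝒳 H Ω : Type*} [MeasurableSpace 𝒳] [AddCommGroup 𝒳]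
    [NormedAddCommGroup H] [InnerProductSpace ℝ H] [CompleteSpace H]
    [SecondCountableTopology H] [MeasurableSpace H] [BorelSpace H] [MeasurableSpace Ω]
    (P : Measure Ω) [IsProbabilityMeasure P]
    (φ : 𝒳 → H) (hφmeas : Measurable φ) (hφbdd : ∃ C : ℝ, ∀ x : 𝒳, ‖φ x‖ ≤ C)
    (hTI : ∃ Ψ : 𝒳 → ℝ, ∀ x y : 𝒳, kerG φ x y = Ψ (x - y))
    (ν : Measure 𝒳) [IsProbabilityMeasure ν]
    (n : ℕ) (hn : 2 ≤ n) (X : ℕ → Ω → 𝒳) (hX : ∀ t, Measurable (X t))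
    (hlaw : ∀ t, Measure.map (X t) P = ν) (hind : iIndepFun X P) (L : ℝ) (hL : 0 < L) :
    P {ω | √(empVar φ n (fun t => X t ω)) * √(2 * L / n)
        + (16 / 3) * √(kerRange φ) * (L / n) < ‖empKME φ n (fun t => X t ω) - KME φ ν‖} ≤
      ENNReal.ofReal (4 * Real.exp (-L)) := by
  obtain ⟨hbd, hvR⟩ := aux_kernel φ hφmeas hφbdd hTI ν
  obtain ⟨C, hC⟩ := hφbdd
  have hInt : Integrable φ ν :=
    Integrable.of_bound hφmeas.aestronglyMeasurable C (ae_of_all _ hC)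
  set m := KME φ ν with hm
  set v : ℝ := ∫ x, ‖φ x - m‖ ^ 2 ∂ν with hv
  have hv0 : 0 ≤ v := integral_nonneg fun x => by positivity
  have hR0 : 0 ≤ kerRange φ := hv0.trans hvR
  have hn2 : (2 : ℝ) ≤ n := by exact_mod_cast hn
  have hn0 : (0 : ℝ) < n := by linarith
  have hsumZ : ∀ ω, empKME φ n (fun t => X t ω) - m =
      (n : ℝ)⁻¹ • ∑ t ∈ range n, (φ (X t ω) - m) := by
    intro ω
    unfold empKME
    rw [Finset.sum_sub_distrib, smul_sub]
    congr 1
    simp only [Finset.sum_const, Finset.card_range]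
    rw [← Nat.cast_smul_eq_nsmul ℝ, smul_smul, inv_mul_cancel₀ hn0.ne', one_smul]
  have hfm : Measurable (fun x => φ x - m) := hφmeas.sub_const m
  have hfm2 : Measurable (fun x => ‖φ x - m‖ ^ 2) := by fun_prop
  have hvar : ∀ t, ∫ ω, ‖φ (X t ω) - m‖ ^ 2 ∂P = v := fun t => by
    rw [hv, ← hlaw t, integral_map (hX t).aemeasurable hfm2.aestronglyMeasurable]
  have hmean : ∀ t, ∫ ω, (φ (X t ω) - m) ∂P = 0 := fun t => by
    have := integral_map (μ := P) (hX t).aemeasurable (f := fun x => φ x - m) hfm.aestronglyMeasurable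
    rw [← this, hlaw t, integral_sub hInt (integrable_const _)]
    simp [hm, KME]
  rcases hv0.eq_or_lt with hvz | hvpos
  · -- degenerate case
    have hae : ∀ t, ∀ᵐ ω ∂P, φ (X t ω) - m = 0 := by
      intro t
      have hi : Integrable (fun ω => ‖φ (X t ω) - m‖ ^ 2) P := by
        refine Integrable.of_bound (hfm2.comp (hX t)).aestronglyMeasurable ((√2 * √(kerRange φ)) ^ 2)
          (ae_of_all _ fun ω => ?_)
        rw [norm_pow, norm_norm]
        exact pow_le_pow_left₀ (norm_nonneg _) (hbd _) 2
      have h := (integral_eq_zero_iff_of_nonneg (fun ω => by positivity) hi).1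
        ((hvar t).trans hvz.symm)
      filter_upwards [h] with ω hω
      simpa using hω
    have hall := ae_all_iff.2 hae
    have hz : P {ω | √(empVar φ n (fun t => X t ω)) * √(2 * L / n)
        + (16 / 3) * √(kerRange φ) * (L / n) < ‖empKME φ n (fun t => X t ω) - m‖} = 0 := by
      have : ∀ᵐ ω ∂P, ¬ (√(empVar φ n (fun t => X t ω)) * √(2 * L / n)
        + (16 / 3) * √(kerRange φ) * (L / n) < ‖empKME φ n (fun t => X t ω) - m‖) := by
        filter_upwards [hall] with ω hω
        rw [hsumZ, Finset.sum_eq_zero fun t _ => hω t, smul_zero, norm_zero, not_lt]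
        positivity
      simpa [ae_iff] using this
    rw [hz]; exact bot_le
  · have hRpos : 0 < kerRange φ := hvpos.trans_le hvR
    have hG : 0 < √(kerRange φ) := Real.sqrt_pos.2 hRpos
    set G := √(kerRange φ) with hGdef
    have hM : 0 < √2 * G := by positivity
    have hn' : 0 < n := by omega
    have B1 := aux_bernstein P (fun t ω => φ (X t ω) - m) (fun t => hfm.comp (hX t)) (√2 * G) v L
      hM hvpos hL (fun t ω => hbd _) (hind.comp (fun _ x => φ x - m) (fun _ => hfm)) hmean hvar n hn'
    have B2 := aux_lower P (fun t ω => ‖φ (X t ω) - m‖ ^ 2) (fun t => hfm2.comp (hX t)) (√2 * G) v L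
      hM hvpos hL (fun t ω => by positivity)
      (fun t ω => pow_le_pow_left₀ (norm_nonneg _) (hbd _) 2)
      (hind.comp (fun _ x => ‖φ x - m‖ ^ 2) (fun _ => hfm2)) hvar n hn'
    have hsub : {ω | √(empVar φ n (fun t => X t ω)) * √(2 * L / n)
        + (16 / 3) * G * (L / n) < ‖empKME φ n (fun t => X t ω) - m‖} ⊆
        {ω | √(2 * n * v * L) + √2 * G * L / 3 < ‖∑ t ∈ range n, (φ (X t ω) - m)‖} ∪
        {ω | ∑ t ∈ range n, ‖φ (X t ω) - m‖ ^ 2 < n * v - √2 * G * √(2 * n * v * L)} := by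
      intro ω hω
      by_contra hcon
      simp only [Set.mem_union, Set.mem_ofPred_eq, not_or, not_lt] at hω hcon
      obtain ⟨c1, c2⟩ := hcon
      set w := √(L / n) with hw
      have hw2 : w ^ 2 = L / n := Real.sq_sqrt (by positivity)
      have hs : √(2 * n * v * L) = n * (√2 * √v * w) := by
        rw [hw, ← Real.sqrt_mul (by norm_num), ← Real.sqrt_mul (by positivity)]
        rw [Real.sqrt_eq_iff_mul_self_eq (by positivity) (by positivity)]
        rw [mul_mul_mul_comm, Real.mul_self_sqrt (by positivity)]
        field_simp
      have h22 : √2 * √2 = 2 := Real.mul_self_sqrt (by norm_num)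
      have hDn : ‖empKME φ n (fun t => X t ω) - m‖ = (n : ℝ)⁻¹ * ‖∑ t ∈ range n, (φ (X t ω) - m)‖ := by
        rw [hsumZ, norm_smul, Real.norm_eq_abs, abs_of_pos (by positivity)]
      have := aux_det (√v) G w ‖empKME φ n (fun t => X t ω) - m‖
        ((n : ℝ)⁻¹ * ∑ t ∈ range n, ‖φ (X t ω) - m‖ ^ 2) (empVar φ n (fun t => X t ω)) n
        (by linarith) (Real.sqrt_nonneg _) (Real.sqrt_le_sqrt hvR) (Real.sqrt_nonneg _)
        (norm_nonneg _) hG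
        (by
          rw [hDn, inv_mul_le_iff₀ hn0, hw2]
          rw [hs] at c1
          refine c1.trans (le_of_eq ?_)
          field_simp)
        (by
          rw [le_inv_mul_iff₀ hn0, Real.sq_sqrt hv0]
          rw [hs] at c2
          refine le_trans (le_of_eq ?_) c2
          linear_combination (n * G * √v * w) * h22)
        (aux_empVar φ n hn (fun t => X t ω) m)
      have e : √(2 * L / n) = √2 * w := by
        rw [hw, ← Real.sqrt_mul (by norm_num), mul_div_assoc]
      rw [e, ← hw2] at hω
      linarith
    calc _ ≤ _ := measure_mono hsub
      _ ≤ _ := measure_union_le _ _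
      _ ≤ ENNReal.ofReal (2 * Real.exp (-L)) + ENNReal.ofReal (Real.exp (-L)) := add_le_add B1 B2
      _ = ENNReal.ofReal (2 * Real.exp (-L) + Real.exp (-L)) :=
          (ENNReal.ofReal_add (by positivity) (by positivity)).symm
      _ ≤ _ := by
          apply ENNReal.ofReal_le_ofReal
          have := Real.exp_pos (-L)
          linarith

/-- (Lemma A.4: variance-aware empirical two-sample bound on the MMD.) For mutually
independent i.i.d. samples `X^i_1,…,X^i_n ∼ ν_i` and `X^j_1,…,X^j_n ∼ ν_j`, with
probability at least `1 − δ'`,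
`| ‖μ̂_j − μ̂_i‖ − ‖μ_j − μ_i‖ | ≤ (√𝒱̂_i + √𝒱̂_j) √(2 log(8/δ')/n) + (32/3) √g̃ log(8/δ')/n`. -/
theorem varianceAware_empirical_MMD_bound
    {𝒳 H Ω : Type*} [MeasurableSpace 𝒳] [AddCommGroup 𝒳]
    [NormedAddCommGroup H] [InnerProductSpace ℝ H] [CompleteSpace H]
    [SecondCountableTopology H] [MeasurableSpace H] [BorelSpace H] [MeasurableSpace Ω]
    (P : Measure Ω) [IsProbabilityMeasure P]
    (φ : 𝒳 → H) (hφmeas : Measurable φ) (hφbdd : ∃ C : ℝ, ∀ x : 𝒳, ‖φ x‖ ≤ C)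
    (hTI : ∃ Ψ : 𝒳 → ℝ, ∀ x y : 𝒳, kerG φ x y = Ψ (x - y))
    (νi νj : Measure 𝒳) [IsProbabilityMeasure νi] [IsProbabilityMeasure νj]
    (n : ℕ) (hn : 2 ≤ n)
    (Xi Xj : ℕ → Ω → 𝒳)
    (hXimeas : ∀ t, Measurable (Xi t)) (hXjmeas : ∀ t, Measurable (Xj t))
    (hXilaw : ∀ t, Measure.map (Xi t) P = νi)
    (hXjlaw : ∀ t, Measure.map (Xj t) P = νj)
    (hindep : iIndepFun (Sum.elim Xi Xj) P)
    (δ' : ℝ) (hδ0 : 0 < δ') (hδ1 : δ' ≤ 1) :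
    ENNReal.ofReal (1 - δ') ≤
      P {ω | |‖empKME φ n (fun t => Xj t ω) - empKME φ n (fun t => Xi t ω)‖
              - ‖KME φ νj - KME φ νi‖|
          ≤ (Real.sqrt (empVar φ n (fun t => Xi t ω))
              + Real.sqrt (empVar φ n (fun t => Xj t ω)))
              * Real.sqrt (2 * Real.log (8 / δ') / n)
            + (32 / 3) * Real.sqrt (kerRange φ) * (Real.log (8 / δ') / n)} := by
  set L := Real.log (8 / δ') with hLdef
  have hL : 0 < L := Real.log_pos (by rw [lt_div_iff₀ hδ0]; linarith)
  have hexp : Real.exp (-L) = δ' / 8 := by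
    rw [hLdef, Real.exp_neg, Real.exp_log (by positivity), inv_div]
  have hi := aux_one P φ hφmeas hφbdd hTI νi n hn Xi hXimeas hXilaw
    (hindep.precomp (g := Sum.inl) Sum.inl_injective) L hL
  have hj := aux_one P φ hφmeas hφbdd hTI νj n hn Xj hXjmeas hXjlaw
    (hindep.precomp (g := Sum.inr) Sum.inr_injective) L hL
  rw [hexp] at hi hj
  set Ei := {ω | √(empVar φ n (fun t => Xi t ω)) * √(2 * L / n)
        + (16 / 3) * √(kerRange φ) * (L / n) < ‖empKME φ n (fun t => Xi t ω) - KME φ νi‖} with hEi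
  set Ej := {ω | √(empVar φ n (fun t => Xj t ω)) * √(2 * L / n)
        + (16 / 3) * √(kerRange φ) * (L / n) < ‖empKME φ n (fun t => Xj t ω) - KME φ νj‖} with hEj
  set E := {ω | |‖empKME φ n (fun t => Xj t ω) - empKME φ n (fun t => Xi t ω)‖
              - ‖KME φ νj - KME φ νi‖|
          ≤ (Real.sqrt (empVar φ n (fun t => Xi t ω))
              + Real.sqrt (empVar φ n (fun t => Xj t ω)))
              * Real.sqrt (2 * L / n)
            + (32 / 3) * Real.sqrt (kerRange φ) * (L / n)} with hE
  have hcover : (Set.univ : Set Ω) ⊆ E ∪ (Ei ∪ Ej) := by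
    intro ω _
    by_contra hcon
    simp only [Set.mem_union, not_or] at hcon
    obtain ⟨h1, h2, h3⟩ := hcon
    rw [hEi, Set.mem_ofPred_eq, not_lt] at h2
    rw [hEj, Set.mem_ofPred_eq, not_lt] at h3
    apply h1
    rw [hE, Set.mem_ofPred_eq]
    refine (abs_norm_sub_norm_le _ _).trans ?_
    have e : empKME φ n (fun t => Xj t ω) - empKME φ n (fun t => Xi t ω) - (KME φ νj - KME φ νi)
      = (empKME φ n (fun t => Xj t ω) - KME φ νj) - (empKME φ n (fun t => Xi t ω) - KME φ νi) := by
      abel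
    rw [e]
    refine (norm_sub_le _ _).trans ?_
    linarith
  have hbad : P (Ei ∪ Ej) ≤ ENNReal.ofReal δ' := by
    calc _ ≤ _ := measure_union_le _ _
      _ ≤ _ := add_le_add hi hj
      _ = ENNReal.ofReal δ' := by
          rw [← ENNReal.ofReal_add (by positivity) (by positivity)]; congr 1; ring
  have htot : (1 : ENNReal) ≤ P E + ENNReal.ofReal δ' := by
    calc (1 : ENNReal) = P Set.univ := measure_univ.symm
      _ ≤ _ := measure_mono hcover
      _ ≤ _ := measure_union_le _ _
      _ ≤ _ := by gcongr
  rw [ENNReal.ofReal_sub _ hδ0.le, ENNReal.ofReal_one]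
  exact tsub_le_iff_right.2 htot


end
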